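/- Let A ∈ ℝ^{m×n}, let B ∈ ℝ^{l×n} be injective, and let p ∈ [1,∞]. Then max over v ∈ ℝ^n with ‖Bv‖_p ≤ 1 of ‖Av‖_∞ equals the maximum over i = 1,…,m of the minimum over β ∈ ℝ^l with Bᵀβ = Aᵀe_i of ‖β‖_{p*}, where e_i is the i-th canonical basis vector of ℝ^m. -/

import Mathlib

/-!
The identity is Hahn–Banach duality for finite-dimensional `ℓ^p` norms. For `c = Aᵀ eᵢ`, the map
`B v ↦ c ⬝ᵥ v` is a well-defined functional on the range of `B`, because `B` is injective, and
its `ℓ^p`-operator norm is the supremum of `|(A v)ᵢ|` over `‖B v‖_p ≤ 1`. Vectors `β` with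
`Bᵀ β = c` are exactly the extensions of this functional to the whole of `ℝ^l`, and their operator
norm is `‖β‖_{p*}`: Hölder's inequality (`dotProduct_le_pNorm_mul_pNorm`) together with its
equality case (`exists_dotProduct_eq_pNorm`). A norm-preserving extension therefore attains the
minimum over `β`, with value the operator norm (`exists_dual_certificate`). Exchanging the
supremum over `v` with the maximum over `i` finishes the proof.
-/

open Matrix
open scoped ENNReal

/-- The vector `p`-norm on `ℝ^k`, for `p ∈ [1,∞]` (given as an element of `ℝ≥0∞`). -/
noncomputable def pNorm {k : ℕ} (p : ℝ≥0∞) (x : Fin k → ℝ) : ℝ :=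
  if p = ∞ then ⨆ i, |x i| else (∑ i, |x i| ^ p.toReal) ^ (1 / p.toReal)

lemma pNorm_top {k : ℕ} (x : Fin k → ℝ) : pNorm ∞ x = ⨆ i, |x i| := by
  simp [pNorm]

lemma pNorm_of_ne_top {k : ℕ} {p : ℝ≥0∞} (hp : p ≠ ∞) (x : Fin k → ℝ) :
    pNorm p x = (∑ i, |x i| ^ p.toReal) ^ (1 / p.toReal) := by
  simp [pNorm, hp]

lemma pNorm_one {k : ℕ} (x : Fin k → ℝ) : pNorm 1 x = ∑ i, |x i| := by
  simp [pNorm]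

lemma pNorm_eq_norm {k : ℕ} {p : ℝ≥0∞} (hp : 1 ≤ p) (x : Fin k → ℝ) :
    pNorm p x = ‖WithLp.toLp p x‖ := by
  by_cases h : p = ∞
  · subst h
    simp [pNorm_top, PiLp.norm_eq_ciSup]
  · rw [pNorm_of_ne_top h,
      PiLp.norm_eq_sum (ENNReal.toReal_pos (zero_lt_one.trans_le hp).ne' h)]
    simp

lemma pNorm_zero {k : ℕ} {p : ℝ≥0∞} (hp : 1 ≤ p) : pNorm p (0 : Fin k → ℝ) = 0 := by
  have : Fact (1 ≤ p) := ⟨hp⟩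
  simp [pNorm_eq_norm hp]

lemma abs_le_pNorm_top {k : ℕ} (x : Fin k → ℝ) (i : Fin k) : |x i| ≤ pNorm ∞ x := by
  rw [pNorm_top]
  exact le_ciSup (f := fun i => |x i|) (Set.finite_range _).bddAbove i

lemma pNorm_nonneg {k : ℕ} (p : ℝ≥0∞) (x : Fin k → ℝ) : 0 ≤ pNorm p x := by
  unfold pNorm
  split_ifs
  · exact Real.iSup_nonneg fun i => abs_nonneg _
  · positivity

/-- Conjugate exponents are `(∞, 1)`, `(1, ∞)`, or both finite and conjugate as reals. -/
lemma conj_cases {p q : ℝ≥0∞} (h : 1 / p + 1 / q = 1) :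
    (p = ∞ ∧ q = 1) ∨ (p = 1 ∧ q = ∞) ∨
      (p ≠ ∞ ∧ q ≠ ∞ ∧ p.toReal.HolderConjugate q.toReal) := by
  by_cases hp : p = ∞
  · left
    subst hp
    simpa using h
  by_cases hq : q = ∞
  · right; left
    subst hq
    simpa using h
  right; right
  have : ENNReal.HolderConjugate p q := ENNReal.holderConjugate_iff.2 (by simpa using h)
  exact ⟨hp, hq, ENNReal.HolderConjugate.toReal_of_ne_top hp hq⟩

lemma sum_abs_mul_le {k : ℕ} (x y : Fin k → ℝ) :
    x ⬝ᵥ y ≤ pNorm ∞ x * pNorm 1 y := by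
  rw [pNorm_one, dotProduct, Finset.mul_sum]
  refine Finset.sum_le_sum fun i _ => (le_abs_self _).trans ?_
  rw [abs_mul]
  exact mul_le_mul_of_nonneg_right (abs_le_pNorm_top x i) (abs_nonneg _)

/-- Hölder's inequality for `pNorm`. -/
lemma dotProduct_le_pNorm_mul_pNorm {k : ℕ} {p q : ℝ≥0∞} (h : 1 / p + 1 / q = 1)
    (β x : Fin k → ℝ) : β ⬝ᵥ x ≤ pNorm q β * pNorm p x := by
  rcases conj_cases h with ⟨rfl, rfl⟩ | ⟨rfl, rfl⟩ | ⟨hp, hq, hpq⟩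
  · rw [dotProduct_comm, mul_comm]
    exact sum_abs_mul_le x β
  · exact sum_abs_mul_le β x
  · rw [pNorm_of_ne_top hp, pNorm_of_ne_top hq]
    exact Real.inner_le_Lp_mul_Lq _ β x hpq.symm

lemma abs_dotProduct_le {k : ℕ} {p q : ℝ≥0∞} (h : 1 / p + 1 / q = 1)
    (β x : Fin k → ℝ) : |β ⬝ᵥ x| ≤ pNorm q β * pNorm p x := by
  refine abs_le'.2 ⟨dotProduct_le_pNorm_mul_pNorm h β x, ?_⟩
  have hx : pNorm p (-x) = pNorm p x := by simp [pNorm]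
  rw [← dotProduct_neg, ← hx]
  exact dotProduct_le_pNorm_mul_pNorm h β (-x)

/-- The equality case of Hölder's inequality: the dual norm is attained on the unit ball. -/
lemma exists_dotProduct_eq_pNorm {k : ℕ} {p q : ℝ≥0∞} (h : 1 / p + 1 / q = 1)
    (β : Fin k → ℝ) : ∃ x, pNorm p x ≤ 1 ∧ β ⬝ᵥ x = pNorm q β := by
  have hsign : ∀ t : ℝ, |((SignType.sign t : SignType) : ℝ)| ≤ 1 := by
    intro t
    rcases lt_trichotomy t 0 with ht | rfl | ht <;> simp [*]
  rcases conj_cases h with ⟨rfl, rfl⟩ | ⟨rfl, rfl⟩ | ⟨hp, hq, hpq⟩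
  · refine ⟨fun i => (SignType.sign (β i) : ℝ), ?_, ?_⟩
    · rw [pNorm_top]
      exact Real.iSup_le (fun i => hsign _) zero_le_one
    · simp [pNorm_one, dotProduct, self_mul_sign]
  · rcases isEmpty_or_nonempty (Fin k) with hk | hk
    · exact ⟨0, by simp [pNorm_one], by simp [pNorm_top, dotProduct]⟩
    · -- All the mass is put on a coordinate where `|β|` is largest.
      obtain ⟨j, hj⟩ := exists_eq_ciSup_of_finite (f := fun i => |β i|)
      refine ⟨Pi.single j (SignType.sign (β j) : ℝ), ?_, ?_⟩
      · rw [pNorm_one, Finset.sum_eq_single j]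
        · simpa using hsign (β j)
        · intro i _ hi
          simp [hi]
        · simp
      · rw [pNorm_top, ← hj, dotProduct_single, self_mul_sign]
  · obtain ⟨⟨g, hg, hgeq⟩, -⟩ := NNReal.isGreatest_Lp Finset.univ
      (fun i => Real.nnabs (β i)) hpq.symm
    -- The optimal nonnegative `g` for `|β|` is given the signs of `β`.
    refine ⟨fun i => SignType.sign (β i) * (g i : ℝ), ?_, ?_⟩
    · rw [pNorm_of_ne_top hp]
      have hg' : ∑ i, (g i : ℝ) ^ p.toReal ≤ 1 := by exact_mod_cast hg
      refine Real.rpow_le_one (by positivity) (le_trans ?_ hg') (by positivity)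
      refine Finset.sum_le_sum fun i _ => ?_
      refine Real.rpow_le_rpow (abs_nonneg _) ?_ hpq.nonneg
      rw [abs_mul, NNReal.abs_eq]
      exact mul_le_of_le_one_left (g i).2 (hsign _)
    · rw [pNorm_of_ne_top hq]
      have := congrArg NNReal.toReal hgeq
      push_cast at this
      rw [← this]
      refine Finset.sum_congr rfl fun i _ => ?_
      rw [← mul_assoc, self_mul_sign]

/-- Hahn–Banach step: some `β` representing `c` through `Bᵀ` has dual norm at most any bound for
`v ↦ |c ⬝ᵥ v|` on `{v | ‖B v‖_p ≤ 1}`. -/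
lemma exists_dual_certificate {n l : ℕ} (B : Matrix (Fin l) (Fin n) ℝ)
    (hB : Function.Injective B.mulVec) {p q : ℝ≥0∞} (hp : 1 ≤ p) (h : 1 / p + 1 / q = 1)
    (c : Fin n → ℝ) :
    ∃ β : Fin l → ℝ, Bᵀ.mulVec β = c ∧
      ∀ M : ℝ, (∀ v, pNorm p (B.mulVec v) ≤ 1 → |c ⬝ᵥ v| ≤ M) → pNorm q β ≤ M := by
  have : Fact (1 ≤ p) := ⟨hp⟩
  let T : (Fin n → ℝ) →ₗ[ℝ] PiLp p (fun _ : Fin l => ℝ) :=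
    (WithLp.linearEquiv p ℝ (Fin l → ℝ)).symm.toLinearMap ∘ₗ B.mulVecLin
  have hTapp : ∀ v, T v = WithLp.toLp p (B.mulVec v) := fun v => rfl
  have hT : Function.Injective T := by
    intro v w hvw
    exact hB ((WithLp.linearEquiv p ℝ (Fin l → ℝ)).symm.injective hvw)
  let e := LinearEquiv.ofInjective T hT
  let d : (Fin n → ℝ) →ₗ[ℝ] ℝ := dotProductBilin ℝ ℝ c
  let f : StrongDual ℝ (LinearMap.range T) :=
    LinearMap.toContinuousLinearMap (d ∘ₗ e.symm.toLinearMap)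
  have hf : ∀ v, f (e v) = c ⬝ᵥ v := by
    intro v
    change d (e.symm (e v)) = _
    rw [e.symm_apply_apply]
    rfl
  obtain ⟨g, hg, hgn⟩ := exists_extension_norm_eq (LinearMap.range T) f
  have hgT : ∀ v, g (T v) = c ⬝ᵥ v := fun v => (hg (e v)).trans (hf v)
  let β : Fin l → ℝ := fun j => g (WithLp.toLp p (Pi.single j 1))
  have hβ : ∀ x : Fin l → ℝ, β ⬝ᵥ x = g (WithLp.toLp p x) := by
    intro x
    have : (WithLp.toLp p x : PiLp p (fun _ : Fin l => ℝ)) =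
        ∑ j, x j • WithLp.toLp p (Pi.single j (1 : ℝ)) := by
      ext i
      simp [Pi.single_apply]
    rw [this, map_sum]
    simp [β, dotProduct, mul_comm]
  refine ⟨β, ?_, fun M hM => ?_⟩
  · refine dotProduct_eq _ _ fun v => ?_
    rw [mulVec_transpose, ← dotProduct_mulVec, hβ, ← hTapp, hgT]
  · have hM0 : 0 ≤ M := (abs_nonneg _).trans (hM 0 (by simp [pNorm_zero hp]))
    have hfM : ‖f‖ ≤ M := by
      refine ContinuousLinearMap.opNorm_le_of_unit_norm hM0 fun y hy => ?_
      obtain ⟨v, rfl⟩ := e.surjective y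
      rw [hf, Real.norm_eq_abs]
      refine hM v ?_
      rw [pNorm_eq_norm hp]
      exact le_of_eq hy
    obtain ⟨x, hx, hxβ⟩ := exists_dotProduct_eq_pNorm h β
    rw [← hxβ, hβ]
    rw [pNorm_eq_norm hp] at hx
    calc g (WithLp.toLp p x) ≤ ‖g‖ * ‖WithLp.toLp p x‖ :=
          (le_abs_self _).trans (g.le_opNorm _)
      _ ≤ ‖g‖ * 1 := mul_le_mul_of_nonneg_left hx (norm_nonneg _)
      _ ≤ M := by rw [mul_one, hgn]; exact hfM

/-- Let `A ∈ ℝ^{m×n}`, `B ∈ ℝ^{l×n}` injective, and `p ∈ [1,∞]` with Hölder conjugate `p*`.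
Then `max { ‖A v‖_∞ : ‖B v‖_p ≤ 1 }` equals
`max over i = 1,…,m of min { ‖β‖_{p*} : Bᵀ β = Aᵀ e_i }`. -/
theorem stmt10 (m n l : ℕ)
    (A : Matrix (Fin m) (Fin n) ℝ) (B : Matrix (Fin l) (Fin n) ℝ)
    (hB : Function.Injective B.mulVec)
    (p pstar : ℝ≥0∞) (hp : 1 ≤ p) (hconj : 1 / p + 1 / pstar = 1) :
    sSup {r : ℝ | ∃ v : Fin n → ℝ, pNorm p (B.mulVec v) ≤ 1 ∧ r = pNorm ∞ (A.mulVec v)} =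
      ⨆ i : Fin m, sInf {r : ℝ | ∃ β : Fin l → ℝ,
        Bᵀ.mulVec β = Aᵀ.mulVec (Pi.single i 1) ∧ r = pNorm pstar β} := by
  have hrow : ∀ i v, Aᵀ.mulVec (Pi.single i 1) ⬝ᵥ v = A.mulVec v i := by
    intro i v
    rw [mulVec_transpose, ← dotProduct_mulVec, single_one_dotProduct]
  -- Weak duality for a single row.
  have hweak : ∀ i (β : Fin l → ℝ), Bᵀ.mulVec β = Aᵀ.mulVec (Pi.single i 1) →
      ∀ v, pNorm p (B.mulVec v) ≤ 1 → |A.mulVec v i| ≤ pNorm pstar β := by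
    intro i β hβ v hv
    rw [← hrow, ← hβ, mulVec_transpose, ← dotProduct_mulVec]
    exact (abs_dotProduct_le hconj β _).trans (mul_le_of_le_one_right (pNorm_nonneg _ _) hv)
  choose β hβ hβM using fun i : Fin m =>
    exists_dual_certificate B hB hp hconj (Aᵀ.mulVec (Pi.single i 1))
  simp only [hrow] at hβM
  have hInf : ∀ i, sInf {r : ℝ | ∃ β : Fin l → ℝ,
        Bᵀ.mulVec β = Aᵀ.mulVec (Pi.single i 1) ∧ r = pNorm pstar β} = pNorm pstar (β i) := by
    intro i
    refine IsLeast.csInf_eq ⟨⟨β i, hβ i, rfl⟩, ?_⟩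
    rintro _ ⟨γ, hγ, rfl⟩
    exact hβM i _ (hweak i γ hγ)
  simp only [hInf]
  have hle : ∀ r ∈ {r : ℝ | ∃ v : Fin n → ℝ, pNorm p (B.mulVec v) ≤ 1 ∧
      r = pNorm ∞ (A.mulVec v)}, r ≤ ⨆ i, pNorm pstar (β i) := by
    rintro _ ⟨v, hv, rfl⟩
    rw [pNorm_top]
    refine Real.iSup_le (fun i => (hweak i (β i) (hβ i) v hv).trans ?_)
      (Real.iSup_nonneg fun i => pNorm_nonneg _ _)
    exact le_ciSup (f := fun i => pNorm pstar (β i)) (Set.finite_range _).bddAbove i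
  refine le_antisymm (csSup_le ⟨_, 0, by simp [pNorm_zero hp], rfl⟩ hle) ?_
  refine Real.iSup_le (fun i => hβM i _ fun v hv => ?_) (Real.sSup_nonneg ?_)
  · exact (abs_le_pNorm_top _ i).trans (le_csSup ⟨_, hle⟩ ⟨v, hv, rfl⟩)
  · rintro _ ⟨v, -, rfl⟩
    exact pNorm_nonneg _ _
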